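/- arXiv:math/0510259 — 2 statements merged into one kernel-verified Lean document; each statement's English description precedes it below -/
import Mathlib

section
/- Let T ⊂ ℂ be the tripod: the union of the three segments joining 0 to the three cube roots of unity, i.e. T = {t•ζ : t ∈ [0,1], ζ³ = 1}. For every natural number m, there is no continuous injective map from T × D^m into EuclideanSpace ℝ (Fin (m+1)), where D^m is the closed unit ball in EuclideanSpace ℝ (Fin m). -/
/-- The tripod: the union of the three segments in `ℂ` joining `0` to the three cube
roots of unity. -/
def tripod : Set ℂ := {z : ℂ | ∃ t ∈ Set.Icc (0 : ℝ) 1, ∃ ζ : ℂ, ζ ^ 3 = 1 ∧ z = t • ζ}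

namespace TripodProof
open Set Metric MeasureTheory

section
variable {E : Type*} [NormedAddCommGroup E] [InnerProductSpace ℝ E]

/-- radial retraction onto the closed unit ball -/
noncomputable def rad (x : E) : E := (max 1 ‖x‖)⁻¹ • x

lemma rad_of_le {x : E} (h : ‖x‖ ≤ 1) : rad x = x := by simp [rad, max_eq_left h]

lemma rad_of_ge {x : E} (h : 1 ≤ ‖x‖) : rad x = ‖x‖⁻¹ • x := by simp [rad, max_eq_right h]

lemma norm_rad_le (x : E) : ‖rad x‖ ≤ 1 := by
  have h : 0 < max 1 ‖x‖ := lt_of_lt_of_le one_pos (le_max_left _ _)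
  rw [rad, norm_smul, norm_inv, Real.norm_of_nonneg h.le, inv_mul_le_iff₀ h]
  simp

lemma rad_lipschitz : LipschitzWith 2 (rad : E → E) := by
  apply LipschitzWith.of_dist_le_mul
  intro x y
  rw [dist_eq_norm, dist_eq_norm]
  set a := max 1 ‖x‖ with ha
  set b := max 1 ‖y‖ with hb
  have ha1 : 1 ≤ a := le_max_left _ _
  have hb1 : 1 ≤ b := le_max_left _ _
  have hyb : ‖y‖ ≤ b := le_max_right _ _
  have hab : |b - a| ≤ ‖x - y‖ := by
    rw [ha, hb]
    refine (abs_max_sub_max_le_max _ _ _ _).trans ?_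
    simp only [sub_self, abs_zero]
    refine max_le (norm_nonneg _) ?_
    rw [norm_sub_rev]
    exact abs_norm_sub_norm_le y x
  have key : rad x - rad y = a⁻¹ • (x - y) + (a⁻¹ * (b - a) * b⁻¹) • y := by
    have : a⁻¹ * (b - a) * b⁻¹ = a⁻¹ - b⁻¹ := by
      field_simp
    rw [this]
    simp only [rad, ← ha, ← hb]
    module
  rw [key]
  have hainv : a⁻¹ ≤ 1 := inv_le_one_of_one_le₀ ha1
  have hbinv : b⁻¹ * ‖y‖ ≤ 1 := by rw [inv_mul_le_iff₀ (by linarith)]; simpa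
  have hainv0 : 0 ≤ a⁻¹ := by positivity
  have hbinv0 : 0 ≤ b⁻¹ := by positivity
  calc _ ≤ ‖a⁻¹ • (x - y)‖ + ‖(a⁻¹ * (b - a) * b⁻¹) • y‖ := norm_add_le _ _
    _ = a⁻¹ * ‖x - y‖ + a⁻¹ * |b - a| * (b⁻¹ * ‖y‖) := by
      rw [norm_smul, norm_smul, Real.norm_of_nonneg hainv0, Real.norm_eq_abs, abs_mul, abs_mul,
        abs_of_nonneg hainv0, abs_of_nonneg hbinv0]
      ring
    _ ≤ 1 * ‖x - y‖ + 1 * ‖x - y‖ * 1 := by gcongr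
    _ = _ := by norm_num; ring

variable [FiniteDimensional ℝ E]

lemma det_pos_of_norm_lt (A : E →L[ℝ] E) (hA : ‖A‖ < 1) :
    0 < (ContinuousLinearMap.id ℝ E + A).det := by
  by_contra hneg
  push Not at hneg
  have hc : Continuous fun s : ℝ => (ContinuousLinearMap.id ℝ E + s • A).det := by
    apply ContinuousLinearMap.continuous_det.comp
    fun_prop
  have h0 : (ContinuousLinearMap.id ℝ E + (0:ℝ) • A).det = 1 := by
    simp [ContinuousLinearMap.det]
  have h1 : (ContinuousLinearMap.id ℝ E + (1:ℝ) • A).det ≤ 0 := by simpa using hneg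
  obtain ⟨s, hs, hs0⟩ := intermediate_value_Icc' (zero_le_one (α := ℝ)) hc.continuousOn
    (show (0:ℝ) ∈ Icc _ _ from ⟨h1, by rw [h0]; exact zero_le_one⟩)
  simp only at hs0
  have hinj : Function.Injective (ContinuousLinearMap.id ℝ E + s • A : E →L[ℝ] E) := by
    rw [injective_iff_map_eq_zero]
    intro x hx
    by_contra hx0
    have hxp : 0 < ‖x‖ := norm_pos_iff.2 hx0
    have : x = -(s • A x) := by
      rw [eq_neg_iff_add_eq_zero]; simpa using hx
    have h2 : ‖x‖ ≤ 1 * (‖A‖ * ‖x‖) := by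
      conv_lhs => rw [this]
      rw [norm_neg, norm_smul, Real.norm_of_nonneg hs.1]
      exact mul_le_mul hs.2 (A.le_opNorm x) (norm_nonneg _) zero_le_one
    nlinarith
  have hker : LinearMap.ker ((ContinuousLinearMap.id ℝ E + s • A : E →L[ℝ] E) : E →ₗ[ℝ] E) = ⊥ :=
    LinearMap.ker_eq_bot.2 hinj
  have := LinearMap.bot_lt_ker_of_det_eq_zero hs0
  rw [hker] at this
  exact lt_irrefl _ this

open Polynomial in
lemma exists_poly_det (A : E →L[ℝ] E) : ∃ p : ℝ[X], p.natDegree ≤ Module.finrank ℝ E ∧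
    ∀ t : ℝ, p.eval t = (ContinuousLinearMap.id ℝ E + t • A).det := by
  classical
  let b := Module.finBasis ℝ E
  let M := LinearMap.toMatrix b b (A : E →ₗ[ℝ] E)
  refine ⟨Matrix.det ((X : ℝ[X]) • M.map C + (1 : Matrix _ _ ℝ).map C), ?_, ?_⟩
  · simpa using Polynomial.natDegree_det_X_add_C_le M 1
  · intro t
    rw [ContinuousLinearMap.det, ← LinearMap.det_toMatrix b, ← coe_evalRingHom, RingHom.map_det]
    congr 1
    ext i j
    by_cases hij : i = j
    · subst hij
      simp [M, LinearMap.toMatrix_apply]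
      ring
    · simp [M, LinearMap.toMatrix_apply, hij]
      ring

lemma exists_weights (K : NNReal) : ∃ (s : Finset ℕ) (t w : ℕ → ℝ), (∀ i, 0 ≤ t i ∧ t i * K < 1) ∧
    ∑ i ∈ s, w i = 1 ∧ ∀ A : E →L[ℝ] E, (ContinuousLinearMap.id ℝ E + A).det =
      ∑ i ∈ s, w i * (ContinuousLinearMap.id ℝ E + t i • A).det := by
  classical
  let s := Finset.range (Module.finrank ℝ E + 1)
  let t : ℕ → ℝ := fun i => ((K : ℝ) + 1 + i)⁻¹
  have ht : Set.InjOn t s := by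
    intro i _ j _ hij
    have := inv_injective hij
    simpa using this
  refine ⟨s, t, fun i => (Lagrange.basis s t i).eval 1, ?_, ?_, ?_⟩
  · intro i
    have hK : (0:ℝ) ≤ K := K.2
    have hp : (0:ℝ) < (K : ℝ) + 1 + i := by positivity
    refine ⟨by positivity, ?_⟩
    simp only [t]
    rw [inv_mul_lt_iff₀ hp]
    have : (0:ℝ) ≤ i := by positivity
    linarith
  · rw [← Polynomial.eval_finsetSum, Lagrange.sum_basis ht ⟨0, by simp [s]⟩]
    simp
  · intro A
    obtain ⟨p, hp, hpe⟩ := exists_poly_det A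
    have h1 := hpe 1
    rw [one_smul] at h1
    rw [← h1]
    have hd : p.degree < s.card := by
      refine lt_of_le_of_lt Polynomial.degree_le_natDegree ?_
      simp only [s, Finset.card_range]
      exact_mod_cast Nat.lt_succ_of_le hp
    rw [Lagrange.eq_interpolate ht hd, Lagrange.interpolate_apply, Polynomial.eval_finsetSum]
    refine Finset.sum_congr rfl fun i _ => ?_
    rw [← hpe]
    simp [mul_comm]

lemma perturb_bij {g : E → E} {K : NNReal} (hg : LipschitzWith K g) {t : ℝ} (ht : 0 ≤ t)
    (htK : t * K < 1) : Function.Bijective fun x => x + t • g x := by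
  constructor
  · intro x y hxy
    simp only at hxy
    by_contra hne
    have hp : 0 < ‖x - y‖ := norm_pos_iff.2 (sub_ne_zero.2 hne)
    have h1 : x - y = t • (g y - g x) := by
      rw [smul_sub, sub_eq_sub_iff_add_eq_add, hxy, add_comm]
    have h2 : ‖x - y‖ ≤ t * (K * ‖x - y‖) := by
      conv_lhs => rw [h1]
      rw [norm_smul, Real.norm_of_nonneg ht, norm_sub_rev]
      exact mul_le_mul_of_nonneg_left (by simpa [dist_eq_norm] using hg.dist_le_mul x y) ht
    nlinarith
  · intro y
    have hco : ((t.toNNReal * K : NNReal) : ℝ) = t * K := by simp [Real.coe_toNNReal t ht]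
    have hc : ContractingWith (t.toNNReal * K) (fun x => y - t • g x) := by
      refine ⟨by rw [← NNReal.coe_lt_coe]; rw [hco]; simpa using htK, ?_⟩
      apply LipschitzWith.of_dist_le_mul
      intro a b
      rw [dist_eq_norm]
      have : y - t • g a - (y - t • g b) = t • (g b - g a) := by module
      rw [this, norm_smul, Real.norm_of_nonneg ht, norm_sub_rev]
      have := mul_le_mul_of_nonneg_left (hg.dist_le_mul a b) ht
      rw [dist_eq_norm] at this
      rw [hco]
      simpa [mul_assoc] using this
    refine ⟨hc.fixedPoint _, ?_⟩
    have h := hc.fixedPoint_isFixedPt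
    have h2 : y - t • g (hc.fixedPoint _) = hc.fixedPoint _ := h
    simp only
    nth_rewrite 1 [← h2]
    abel

variable [MeasurableSpace E] [BorelSpace E]

lemma integral_det_small {g : E → E} {K : NNReal} (hg : LipschitzWith K g)
    (h0 : ∀ x, 1 ≤ ‖x‖ → g x = 0) (hd : ∀ x ∈ ball (0 : E) 1, DifferentiableAt ℝ g x)
    {t : ℝ} (ht : 0 ≤ t) (htK : t * K < 1) :
    IntegrableOn (fun x => (ContinuousLinearMap.id ℝ E + t • fderiv ℝ g x).det) (ball (0:E) 1) ∧
    ∫ x in ball (0:E) 1, (ContinuousLinearMap.id ℝ E + t • fderiv ℝ g x).det =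
      (volume : Measure E).real (ball (0:E) 1) := by
  set F : E → E := fun x => x + t • g x with hF
  have hbij := perturb_bij hg ht htK
  have himg : F '' ball 0 1 = ball 0 1 := by
    have hfix : ∀ x, 1 ≤ ‖x‖ → F x = x := fun x hx => by simp [hF, h0 x hx]
    apply Subset.antisymm
    · rintro _ ⟨x, hx, rfl⟩
      by_contra hn
      have hnn : 1 ≤ ‖F x‖ := by simpa using hn
      have : F x = x := hbij.1 (hfix _ hnn)
      rw [this] at hnn
      simp at hx
      linarith
    · intro y hy
      obtain ⟨x, rfl⟩ := hbij.2 y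
      refine ⟨x, ?_, rfl⟩
      by_contra hn
      have hnn : 1 ≤ ‖x‖ := by simpa using hn
      have h3 : ‖F x‖ < 1 := by simpa using hy
      rw [hfix _ hnn] at h3
      linarith
  have hder : ∀ x ∈ ball (0:E) 1, HasFDerivWithinAt F
      (ContinuousLinearMap.id ℝ E + t • fderiv ℝ g x) (ball 0 1) x := fun x hx =>
    ((hasFDerivAt_id x).add ((hd x hx).hasFDerivAt.const_smul t)).hasFDerivWithinAt
  have habs : ∀ x ∈ ball (0:E) 1, |(ContinuousLinearMap.id ℝ E + t • fderiv ℝ g x).det| • (1:ℝ)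
      = (ContinuousLinearMap.id ℝ E + t • fderiv ℝ g x).det := by
    intro x _
    rw [smul_eq_mul, mul_one, abs_of_pos]
    apply det_pos_of_norm_lt
    rw [norm_smul, Real.norm_of_nonneg ht]
    exact lt_of_le_of_lt (mul_le_mul_of_nonneg_left (norm_fderiv_le_of_lipschitz ℝ hg) ht) htK
  have hinj : InjOn F (ball 0 1) := hbij.1.injOn
  constructor
  · have := (integrableOn_image_iff_integrableOn_abs_det_fderiv_smul (volume : Measure E)
      measurableSet_ball hder hinj (fun _ => (1:ℝ))).1 (by
        rw [himg]; exact integrableOn_const measure_ball_lt_top.ne)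
    exact this.congr_fun habs measurableSet_ball
  · have := integral_image_eq_integral_abs_det_fderiv_smul (volume : Measure E)
      measurableSet_ball hder hinj (fun _ => (1:ℝ))
    rw [himg, setIntegral_congr_fun measurableSet_ball habs] at this
    rw [← this]
    simp

lemma integral_det {g : E → E} {K : NNReal} (hg : LipschitzWith K g)
    (h0 : ∀ x, 1 ≤ ‖x‖ → g x = 0) (hd : ∀ x ∈ ball (0 : E) 1, DifferentiableAt ℝ g x) :
    ∫ x in ball (0:E) 1, (ContinuousLinearMap.id ℝ E + fderiv ℝ g x).det =
      (volume : Measure E).real (ball (0:E) 1) := by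
  obtain ⟨s, t, w, ht, hw, hA⟩ := exists_weights (E := E) K
  rw [setIntegral_congr_fun measurableSet_ball (fun x _ => hA (fderiv ℝ g x)),
    integral_finsetSum]
  · simp_rw [integral_const_mul]
    rw [Finset.sum_congr rfl fun i _ => by
      rw [(integral_det_small hg h0 hd (ht i).1 (ht i).2).2], ← Finset.sum_mul, hw, one_mul]
  · intro i _
    exact (integral_det_small hg h0 hd (ht i).1 (ht i).2).1.const_mul _

lemma smooth_zero {u : E → E} (hu : ContDiff ℝ 1 u) (h0 : ∀ x, 1 ≤ ‖x‖ → u x = 0) :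
    ∃ x, x + u x = 0 := by
  by_contra hne
  push Not at hne
  set G : E → E := fun x => x + u x with hG
  have hGc : ContDiff ℝ 1 G := contDiff_id.add hu
  obtain ⟨cm, hcm0, hcm⟩ := (isCompact_closedBall (0:E) 1).exists_forall_le'
    hGc.continuous.norm.continuousOn (a := 0) (fun x _ => norm_pos_iff.2 (hne x))
  set c := min cm 1 with hcdef
  have hc0 : 0 < c := lt_min hcm0 one_pos
  have hc : ∀ x, c ≤ ‖G x‖ := by
    intro x
    rcases le_total ‖x‖ 1 with h | h
    · exact (min_le_left _ _).trans (hcm x (by simpa using h))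
    · have : G x = x := by simp [hG, h0 x h]
      rw [this]
      exact (min_le_right _ _).trans h
  have hsupp : HasCompactSupport u := by
    apply HasCompactSupport.of_support_subset_isCompact (isCompact_closedBall (0:E) 1)
    intro x hx
    by_contra hn
    have : 1 < ‖x‖ := by simpa using hn
    exact hx (h0 x this.le)
  obtain ⟨Ku, hKu⟩ := hu.lipschitzWith_of_hasCompactSupport hsupp one_ne_zero
  have hGL : LipschitzWith (1 + Ku) G := LipschitzWith.id.add hKu
  have hcG : LipschitzWith (‖c⁻¹‖₊ * (1 + Ku)) (fun x => c⁻¹ • G x) :=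
    (lipschitzWith_smul c⁻¹).comp hGL
  let g : E → E := fun x => rad (c⁻¹ • G x) - rad x
  have hgL : LipschitzWith _ g := (rad_lipschitz.comp hcG).sub (rad_lipschitz (E := E))
  have hradG : ∀ x, rad (c⁻¹ • G x) = ‖G x‖⁻¹ • G x := by
    intro x
    have hn : ‖c⁻¹ • G x‖ = c⁻¹ * ‖G x‖ := by
      rw [norm_smul, Real.norm_of_nonneg (by positivity)]
    rw [rad_of_ge, hn, smul_smul]
    · congr 1
      field_simp
    · rw [hn, le_inv_mul_iff₀ hc0]
      simpa using hc x
  have hg0 : ∀ x, 1 ≤ ‖x‖ → g x = 0 := by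
    intro x hx
    have : G x = x := by simp [hG, h0 x hx]
    simp only [g]
    rw [hradG, this, rad_of_ge hx, sub_self]
  let r : E → E := fun x => ‖G x‖⁻¹ • G x
  have hrd : ∀ x, DifferentiableAt ℝ r x := by
    intro x
    have hGd := (hGc.differentiable one_ne_zero) x
    exact ((hGd.norm ℝ (hne x)).inv (norm_ne_zero_iff.2 (hne x))).smul hGd
  have hgr : ∀ x ∈ ball (0:E) 1, g =ᶠ[nhds x] fun y => r y - y := by
    intro x hx
    filter_upwards [isOpen_ball.mem_nhds hx] with y hy
    simp only [g, r]
    rw [hradG, rad_of_le]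
    exact (mem_ball_zero_iff.1 hy).le
  have hgd : ∀ x ∈ ball (0:E) 1, DifferentiableAt ℝ g x := fun x hx =>
    ((hrd x).sub differentiableAt_id).congr_of_eventuallyEq (hgr x hx)
  have hI := integral_det hgL hg0 hgd
  have hz : ∀ x ∈ ball (0:E) 1, (ContinuousLinearMap.id ℝ E + fderiv ℝ g x).det = (0:ℝ) := by
    intro x hx
    have hf : ContinuousLinearMap.id ℝ E + fderiv ℝ g x = fderiv ℝ r x := by
      rw [(hgr x hx).fderiv_eq, fderiv_fun_sub (hrd x) differentiableAt_fun_id]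
      simp
    rw [hf]
    by_contra hdet
    have hn1 : ∀ y, inner ℝ (r y) (r y) = (1:ℝ) := by
      intro y
      rw [real_inner_self_eq_norm_sq]
      simp only [r]
      rw [norm_smul, norm_inv, norm_norm, inv_mul_cancel₀ (norm_ne_zero_iff.2 (hne y))]
      norm_num
    have hder := (hrd x).hasFDerivAt.inner ℝ (hrd x).hasFDerivAt
    have hconst : HasFDerivAt (fun y => inner ℝ (r y) (r y)) (0 : E →L[ℝ] ℝ) x := by
      simp_rw [hn1]
      exact hasFDerivAt_const _ _
    have heq := hder.unique hconst
    obtain ⟨v, hv⟩ : ∃ v, fderiv ℝ r x v = r x := by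
      have hs : Function.Surjective ((fderiv ℝ r x : E →L[ℝ] E) : E →ₗ[ℝ] E) := by
        have hu := (LinearMap.isUnit_iff_isUnit_det _).2 (isUnit_iff_ne_zero.2 hdet)
        exact ((Module.End.isUnit_iff _).1 hu).2
      exact hs (r x)
    have h2 := congrArg (fun L : E →L[ℝ] ℝ => L v) heq
    simp [hv, fderivInnerCLM_apply] at h2
    have h3 := hn1 x
    simp [h2] at h3
  rw [setIntegral_congr_fun measurableSet_ball hz] at hI
  simp only [integral_zero] at hI
  have hpos : 0 < (volume : Measure E).real (ball (0:E) 1) :=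
    ENNReal.toReal_pos (measure_ball_pos _ _ one_pos).ne' measure_ball_lt_top.ne
  linarith

lemma continuous_zero {F : E → E} (hF : Continuous F)
    (h : ∀ x, ‖x‖ ≤ 1 → ‖F x - x‖ ≤ 1 / 4) : ∃ x, ‖x‖ ≤ 1 ∧ F x = 0 := by
  by_contra hne
  push Not at hne
  let χ : E → ℝ := fun x => max 0 (min 1 (2 - 2 * ‖x‖))
  have hχ : Continuous χ := by fun_prop
  have hχ0 : ∀ x, 0 ≤ χ x := fun x => le_max_left _ _
  have hχ1 : ∀ x, χ x ≤ 1 := fun x => max_le zero_le_one (min_le_left _ _)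
  let u : E → E := fun x => χ x • (F x - x)
  have hu : Continuous u := by fun_prop
  have hu0 : ∀ x, 1 ≤ ‖x‖ → u x = 0 := by
    intro x hx
    have : χ x = 0 := max_eq_left ((min_le_right _ _).trans (by linarith))
    simp [u, this]
  have hG : ∀ x, x + u x ≠ 0 := by
    intro x hx
    rcases le_total ‖x‖ (1/2) with h1 | h1
    · have : χ x = 1 := by
        simp only [χ]
        rw [min_eq_left (by linarith), max_eq_right zero_le_one]
      simp only [u, this, one_smul, add_sub_cancel] at hx
      exact hne x (by linarith) hx
    rcases le_total ‖x‖ 1 with h2 | h2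
    · have h3 : ‖u x‖ ≤ 1 * (1/4) := by
        simp only [u]
        rw [norm_smul, Real.norm_of_nonneg (hχ0 x)]
        exact mul_le_mul (hχ1 x) (h x h2) (norm_nonneg _) zero_le_one
      rw [eq_neg_of_add_eq_zero_left hx, norm_neg] at h1
      linarith
    · rw [hu0 x h2, add_zero] at hx
      rw [hx, norm_zero] at h2
      linarith
  obtain ⟨v, hv, hvu, hsupp⟩ := hu.exists_contDiff_approx 1 (ε := fun x => ‖x + u x‖)
    (by fun_prop) (fun x => norm_pos_iff.2 (hG x))
  obtain ⟨x, hx⟩ := smooth_zero (u := v) (by simpa using hv) (by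
    intro x hx
    by_contra hn
    exact hsupp hn (hu0 x hx))
  have h1 := hvu x
  rw [eq_neg_of_add_eq_zero_right hx, dist_eq_norm, ← norm_neg] at h1
  have : -(-x - u x) = x + u x := by abel
  rw [this] at h1
  exact lt_irrefl _ h1

theorem range_mem_nhds (f : closedBall (0:E) 1 → E) (hf : Continuous f)
    (hinj : Function.Injective f) : range f ∈ nhds (f ⟨0, by simp⟩) := by
  set y₀ := f ⟨0, by simp⟩ with hy₀
  have : CompactSpace (closedBall (0:E) 1) := isCompact_iff_compactSpace.1 (isCompact_closedBall _ _)
  have hemb : Topology.IsClosedEmbedding f := hf.isClosedEmbedding hinj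
  obtain ⟨G, hG⟩ := ContinuousMap.exists_extension' (Y := E) hemb
    (⟨Subtype.val, continuous_subtype_val⟩ : C(closedBall (0:E) 1, E))
  have hGf : ∀ x, G (f x) = x := fun x => congrFun hG x
  by_contra hnot
  have hGy : G y₀ = 0 := hGf _
  obtain ⟨ρ, hρ, hGρ⟩ := Metric.continuousAt_iff.1 (G.continuous.continuousAt (x := y₀)) (1/10)
    (by norm_num)
  rw [hGy] at hGρ
  simp only [dist_zero_right] at hGρ
  set ε := ρ / 3 with hε
  have hε0 : 0 < ε := by positivity
  obtain ⟨c, hcb, hcr⟩ : ∃ c ∈ ball y₀ ε, c ∉ range f := by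
    by_contra hall
    push Not at hall
    exact hnot (Filter.mem_of_superset (ball_mem_nhds _ hε0) hall)
  have hcy : dist c y₀ < ε := hcb
  let S : Set E := range f ∩ {y | ε ≤ dist y c}
  have hS : IsCompact S := (isCompact_range hf).inter_right
    (isClosed_le continuous_const (by fun_prop))
  have hSG : ∀ y ∈ S, 0 < ‖G y‖ := by
    rintro _ ⟨⟨x, rfl⟩, hx⟩
    rw [norm_pos_iff, hGf]
    intro hx0
    have : x = ⟨0, by simp⟩ := Subtype.ext hx0
    subst this
    have h2 : ε ≤ dist y₀ c := hx
    rw [dist_comm] at h2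
    linarith
  obtain ⟨dm, hdm0, hdm⟩ := hS.exists_forall_le' G.continuous.norm.continuousOn hSG
  set δ := min dm (1/20) with hδ
  have hδ0 : 0 < δ := lt_min hdm0 (by norm_num)
  have hδ20 : δ ≤ 1/20 := min_le_right _ _
  obtain ⟨P, hP, hPG, -⟩ := G.continuous.exists_contDiff_approx 1 (ε := fun _ => δ / 2)
    continuous_const (fun _ => by positivity)
  have hnull : (volume : Measure E) (P '' sphere c ε) = 0 :=
    addHaar_image_eq_zero_of_differentiableOn_of_addHaar_eq_zero _
      (hP.differentiable (by simp)).differentiableOn (Measure.addHaar_sphere_of_ne_zero _ _ hε0.ne')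
  obtain ⟨w, hwb, hwP⟩ : ∃ w ∈ ball (0:E) (δ/2), w ∉ P '' sphere c ε := by
    by_contra hall
    push Not at hall
    have h1 : (volume : Measure E) (ball (0:E) (δ/2)) ≤ 0 := hnull ▸ measure_mono hall
    exact absurd h1 (not_le.2 (measure_ball_pos _ _ (by positivity)))
  have hw : ‖w‖ < δ / 2 := by simpa using hwb
  have hPw : ∀ y, ‖P y - w - G y‖ < δ := by
    intro y
    have h1 := hPG y
    rw [dist_eq_norm] at h1
    calc ‖P y - w - G y‖ = ‖(P y - G y) - w‖ := by congr 1; abel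
      _ ≤ ‖P y - G y‖ + ‖w‖ := norm_sub_le _ _
      _ < δ := by linarith
  let Φ : E → E := fun y => c + max (ε / ‖y - c‖) 1 • (y - c)
  have hΦ1 : ∀ y, ε ≤ ‖y - c‖ → Φ y = y := by
    intro y hy
    have : max (ε / ‖y - c‖) 1 = 1 := max_eq_right (div_le_one_of_le₀ hy (norm_nonneg _))
    simp [Φ, this]
  have hΦ2 : ∀ y, y ≠ c → ‖y - c‖ ≤ ε → ‖Φ y - c‖ = ε := by
    intro y hyc hy
    have hp : 0 < ‖y - c‖ := norm_pos_iff.2 (sub_ne_zero.2 hyc)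
    have : max (ε / ‖y - c‖) 1 = ε / ‖y - c‖ := max_eq_left ((one_le_div hp).2 hy)
    simp only [Φ, this, add_sub_cancel_left]
    rw [norm_smul, Real.norm_of_nonneg (by positivity)]
    field_simp
  have hfc : ∀ x, f x ≠ c := fun x hx => hcr ⟨x, hx⟩
  let q : E → closedBall (0:E) 1 := fun x => ⟨rad x, by simpa using norm_rad_le x⟩
  have hq : Continuous q := rad_lipschitz.continuous.subtype_mk _
  have hfq : Continuous fun x => f (q x) := hf.comp hq
  let F : E → E := fun x => P (Φ (f (q x))) - w
  have hF : Continuous F := by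
    refine (hP.continuous.comp ?_).sub continuous_const
    have h1 : Continuous fun x => f (q x) - c := hfq.sub continuous_const
    refine continuous_const.add (Continuous.smul ?_ h1)
    exact (continuous_const.div h1.norm
      (fun x => norm_ne_zero_iff.2 (sub_ne_zero.2 (hfc _)))).max continuous_const
  obtain ⟨x, hx1, hx0⟩ := continuous_zero hF (by
    intro x hx
    have hqx : (q x : E) = x := rad_of_le hx
    have hGx : G (f (q x)) = x := by rw [hGf, hqx]
    simp only [F]
    generalize hy : f (q x) = y at *
    have hyc : y ≠ c := hy ▸ hfc _
    rcases le_total ε ‖y - c‖ with h1 | h1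
    · rw [hΦ1 y h1]
      have := hPw y
      rw [hGx] at this
      linarith
    · have h2 := hΦ2 y hyc h1
      have h3 : ‖G (Φ y)‖ < 1/10 := by
        apply hGρ
        have := dist_triangle (Φ y) c y₀
        rw [dist_eq_norm (Φ y) c, h2] at this
        linarith
      have h4 : ‖G y‖ < 1/10 := by
        apply hGρ
        have := dist_triangle y c y₀
        rw [dist_eq_norm y c] at this
        linarith
      rw [hGx] at h4
      have h5 := hPw (Φ y)
      calc ‖P (Φ y) - w - x‖ = ‖(P (Φ y) - w - G (Φ y)) + G (Φ y) - x‖ := by congr 1; abel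
        _ ≤ ‖(P (Φ y) - w - G (Φ y)) + G (Φ y)‖ + ‖x‖ := norm_sub_le _ _
        _ ≤ ‖(P (Φ y) - w - G (Φ y))‖ + ‖G (Φ y)‖ + ‖x‖ := by gcongr; exact norm_add_le _ _
        _ ≤ 1/4 := by linarith)
  simp only [F] at hx0
  rcases le_total ε ‖f (q x) - c‖ with h1 | h1
  · rw [hΦ1 _ h1] at hx0
    have h2 := hPw (f (q x))
    rw [hx0, zero_sub, norm_neg] at h2
    have h3 := hdm (f (q x)) ⟨⟨_, rfl⟩, by simpa [dist_eq_norm] using h1⟩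
    have := min_le_left dm (1/20)
    linarith
  · apply hwP
    refine ⟨Φ (f (q x)), ?_, sub_eq_zero.1 hx0⟩
    rw [mem_sphere, dist_eq_norm]
    exact hΦ2 _ (hfc _) h1

end
end TripodProof

namespace TripodProof

/-- a primitive cube root of unity -/
noncomputable def om : ℂ := ⟨-1/2, √3/2⟩
/-- the conjugate cube root of unity -/
noncomputable def omc : ℂ := ⟨-1/2, -(√3/2)⟩

lemma om_cube : om ^ 3 = 1 := by
  have h : √3 ^ 2 = 3 := Real.sq_sqrt (by norm_num)
  apply Complex.ext
  · simp [om, pow_succ]; ring_nf; rw [h]; norm_num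
  · simp [om, pow_succ]; ring_nf; rw [show √3 ^ 3 = √3 ^ 2 * √3 by ring, h]; ring

lemma omc_cube : omc ^ 3 = 1 := by
  have h : √3 ^ 2 = 3 := Real.sq_sqrt (by norm_num)
  apply Complex.ext
  · simp [omc, pow_succ]; ring_nf; rw [h]; norm_num
  · simp [omc, pow_succ]; ring_nf; rw [show √3 ^ 3 = √3 ^ 2 * √3 by ring, h]; ring

/-- the arc consisting of two legs of the tripod -/
noncomputable def leg (s : ℝ) : ℂ := max s 0 • (1:ℂ) + max (-s) 0 • om

lemma leg_im (s : ℝ) : (leg s).im = max (-s) 0 * (√3 / 2) := by simp [leg, om]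
lemma leg_re (s : ℝ) : (leg s).re = max s 0 - max (-s) 0 / 2 := by simp [leg, om]; ring

lemma leg_mem {s : ℝ} (hs : |s| ≤ 1) : leg s ∈ tripod := by
  rw [abs_le] at hs
  rcases le_total 0 s with h | h
  · exact ⟨s, ⟨h, hs.2⟩, 1, by norm_num, by simp [leg, h]⟩
  · exact ⟨-s, ⟨by linarith, by linarith⟩, om, om_cube, by simp [leg, h]⟩

lemma leg_inj : Function.Injective leg := by
  intro s t h
  have h3 : (0:ℝ) < √3 / 2 := by positivity
  have hi : max (-s) 0 = max (-t) 0 := by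
    have := congrArg Complex.im h
    rw [leg_im, leg_im] at this
    exact mul_right_cancel₀ h3.ne' this
  have hr := congrArg Complex.re h
  rw [leg_re, leg_re, hi] at hr
  have hr' : max s 0 = max t 0 := by linarith
  rcases le_total 0 s with a | a <;> rcases le_total 0 t with b | b <;>
    simp [a, b] at hi hr' <;> linarith

lemma leg_cont : Continuous leg := by unfold leg; fun_prop

/-- all coordinates but the first -/
noncomputable def tail {m : ℕ} (x : EuclideanSpace ℝ (Fin (m+1))) : EuclideanSpace ℝ (Fin m) :=
  WithLp.toLp 2 fun i => x i.succ

lemma tail_cont {m : ℕ} : Continuous (tail (m := m)) := by unfold tail; fun_prop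

lemma norm_tail {m : ℕ} (x : EuclideanSpace ℝ (Fin (m+1))) :
    ‖x‖ ^ 2 = |x 0| ^ 2 + ‖tail x‖ ^ 2 := by
  rw [EuclideanSpace.norm_sq_eq, EuclideanSpace.norm_sq_eq, Fin.sum_univ_succ]
  simp [tail]

end TripodProof

/-- Euclidean `(m+1)`-space contains no `(m+1)`-branching point: there is no continuous
injective map from `T × Dᵐ` (the `(m+1)`-dimensional tripod) into
`EuclideanSpace ℝ (Fin (m+1))`. -/
theorem no_injective_tripod_map_into_euclidean (m : ℕ) :
    ¬ ∃ f : tripod × Metric.closedBall (0 : EuclideanSpace ℝ (Fin m)) 1 →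
        EuclideanSpace ℝ (Fin (m + 1)),
      Continuous f ∧ Function.Injective f := by
  rintro ⟨f, hf, hinj⟩
  have hb : ∀ x : Metric.closedBall (0 : EuclideanSpace ℝ (Fin (m+1))) 1,
      |x.1 0| ≤ 1 ∧ ‖TripodProof.tail x.1‖ ≤ 1 := by
    rintro ⟨x, hx⟩
    have hx' : ‖x‖ ≤ 1 := by simpa using hx
    have h := TripodProof.norm_tail x
    have h1 : ‖x‖ ^ 2 ≤ 1 := pow_le_one₀ (norm_nonneg _) hx'
    constructor
    · exact (sq_le_one_iff₀ (abs_nonneg _)).1 (by nlinarith [sq_nonneg ‖TripodProof.tail x‖])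
    · exact (sq_le_one_iff₀ (norm_nonneg _)).1 (by nlinarith [sq_nonneg |x 0|])
  let φ : Metric.closedBall (0 : EuclideanSpace ℝ (Fin (m+1))) 1 →
      tripod × Metric.closedBall (0 : EuclideanSpace ℝ (Fin m)) 1 := fun x =>
    (⟨TripodProof.leg (x.1 0), TripodProof.leg_mem (hb x).1⟩,
      ⟨TripodProof.tail x.1, by simpa using (hb x).2⟩)
  have hφ : Continuous φ := by
    refine Continuous.prodMk (Continuous.subtype_mk ?_ _) (Continuous.subtype_mk ?_ _)
    · exact TripodProof.leg_cont.comp (by fun_prop)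
    · exact TripodProof.tail_cont.comp continuous_subtype_val
  have hφi : Function.Injective φ := by
    intro x y hxy
    have h1 : x.1 0 = y.1 0 := TripodProof.leg_inj (congrArg (fun p => (p.1 : ℂ)) hxy)
    have h2 : TripodProof.tail x.1 = TripodProof.tail y.1 :=
      congrArg (fun p => (p.2 : EuclideanSpace ℝ (Fin m))) hxy
    apply Subtype.ext
    ext i
    refine Fin.cases h1 (fun j => ?_) i
    exact congrArg (fun v : EuclideanSpace ℝ (Fin m) => v j) h2
  have hn := TripodProof.range_mem_nhds (f ∘ φ) (hf.comp hφ) (hinj.comp hφi)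
  let γ : Set.Icc (0:ℝ) 1 → tripod × Metric.closedBall (0 : EuclideanSpace ℝ (Fin m)) 1 :=
    fun t => (⟨(t : ℝ) • TripodProof.omc, t, t.2, _, TripodProof.omc_cube, rfl⟩, ⟨0, by simp⟩)
  have hγ : Continuous γ := by
    refine Continuous.prodMk (Continuous.subtype_mk ?_ _) continuous_const
    fun_prop
  have h0 : γ 0 = φ ⟨0, by simp⟩ := by
    refine Prod.ext (Subtype.ext ?_) (Subtype.ext ?_)
    · simp [γ, φ, TripodProof.leg]
    · ext i
      simp [γ, φ, TripodProof.tail]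
  have hev : ∀ᶠ t in nhds (0 : Set.Icc (0:ℝ) 1), f (γ t) ∈ Set.range (f ∘ φ) := by
    apply (hf.comp hγ).continuousAt.eventually_mem
    simpa [h0] using hn
  obtain ⟨δ, hδ, hδb⟩ := Metric.eventually_nhds_iff.1 hev
  have hmin : 0 < min (δ/2) 1 := lt_min (by positivity) one_pos
  obtain ⟨x, hx⟩ := hδb (y := ⟨min (δ/2) 1, hmin.le, min_le_right _ _⟩) (by
    rw [Subtype.dist_eq, Real.dist_eq]
    simp only [Set.Icc.coe_zero, sub_zero]
    rw [abs_of_pos hmin]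
    exact lt_of_le_of_lt (min_le_left _ _) (by linarith))
  have h1 := congrArg (fun p => (p.1 : ℂ).im) (hinj hx)
  have h3 : (0:ℝ) < √3 / 2 := by positivity
  simp only [φ, γ, TripodProof.leg_im, TripodProof.omc, Complex.smul_im, smul_eq_mul] at h1
  have h4 : 0 ≤ max (-(x.1 0)) 0 * (√3 / 2) := mul_nonneg (le_max_right _ _) h3.le
  have h5 : 0 < min (δ/2) 1 * (√3 / 2) := mul_pos hmin h3
  linarith
end

section
/- Let T ⊂ ℂ be the tripod: the union of the three segments joining 0 to the three cube roots of unity, i.e. T = {t•ζ : t ∈ [0,1], ζ³ = 1}. For every natural number m, there is no continuous injective map from T × D^m into the unit sphere S^{m+1} = Metric.sphere 0 1 of EuclideanSpace ℝ (Fin (m+2)), where D^m is the closed unit ball in EuclideanSpace ℝ (Fin m). In other words, no point of the sphere S^{m+1} is (m+1)-branching. -/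
open Set Metric MeasureTheory Topology

section Tripod
set_option linter.unusedSectionVars false
variable {E : Type} [NormedAddCommGroup E] [InnerProductSpace ℝ E] [FiniteDimensional ℝ E]

lemma det_interp (A : E →L[ℝ] E) (t : Fin (Module.finrank ℝ E + 1) → ℝ)
    (ht : Function.Injective t) :
    (1 + A).det = ∑ i, (Lagrange.basis Finset.univ t i).eval 1 * (1 + t i • A).det := by
  classical
  let b := Module.finBasis ℝ E
  let M := LinearMap.toMatrix b b (A : E →ₗ[ℝ] E)
  let p : Polynomial ℝ := Matrix.det ((Polynomial.X : Polynomial ℝ) • M.map Polynomial.C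
    + (1 : Matrix _ _ ℝ).map Polynomial.C)
  have hp : ∀ s : ℝ, p.eval s = (1 + s • A).det := by
    intro s
    have h1 : (1 + s • A).det = Matrix.det (1 + s • M) := by
      change LinearMap.det ((1 + s • A : E →L[ℝ] E) : E →ₗ[ℝ] E) = _
      rw [← LinearMap.det_toMatrix b]
      congr 1
      simp [M, map_add, LinearMap.toMatrix_one, ContinuousLinearMap.toLinearMap_add]
    rw [h1]
    simp only [p]
    rw [← Polynomial.coe_evalRingHom, RingHom.map_det]
    congr 1
    ext i j
    rcases eq_or_ne i j with hij | hij
    · subst hij; simp; ring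
    · simp [Matrix.one_apply_ne hij]; ring
  have hdeg : p.degree < (Finset.univ : Finset (Fin (Module.finrank ℝ E + 1))).card := by
    refine lt_of_le_of_lt Polynomial.degree_le_natDegree ?_
    have := Polynomial.natDegree_det_X_add_C_le M (1 : Matrix _ _ ℝ)
    simp only [Fintype.card_fin, Finset.card_univ] at this ⊢
    exact_mod_cast Nat.lt_succ_of_le this
  have h := Lagrange.eq_interpolate (v := t) (s := Finset.univ) ht.injOn hdeg
  have h2 := congrArg (Polynomial.eval 1) h
  rw [hp 1, one_smul] at h2
  rw [h2, Lagrange.interpolate_apply, Polynomial.eval_finsetSum]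
  refine Finset.sum_congr rfl fun i _ => ?_
  rw [Polynomial.eval_mul, Polynomial.eval_C, hp, mul_comm]

lemma sum_basis_one (N : ℕ) (t : Fin (N + 1) → ℝ) (ht : Function.Injective t) :
    ∑ i, (Lagrange.basis Finset.univ t i).eval 1 = 1 := by
  have := Lagrange.sum_basis (v := t) (s := Finset.univ) ht.injOn Finset.univ_nonempty
  have := congrArg (Polynomial.eval 1) this
  simpa [Polynomial.eval_finsetSum] using this

lemma det_one_add_pos (A : E →L[ℝ] E) (hA : ‖A‖ < 1) : 0 < (1 + A).det := by
  by_contra hneg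
  push Not at hneg
  have hcont : ContinuousOn (fun s : ℝ => (1 + s • A).det) (Icc 0 1) := by
    apply Continuous.continuousOn
    exact ContinuousLinearMap.continuous_det.comp (by fun_prop)
  have h0 : (fun s : ℝ => (1 + s • A).det) 0 = 1 := by simp [ContinuousLinearMap.det]
  have h1 : (fun s : ℝ => (1 + s • A).det) 1 ≤ 0 := by simpa using hneg
  obtain ⟨s, hs, hs0⟩ := intermediate_value_Icc' zero_le_one hcont
    (show (0:ℝ) ∈ Icc _ _ from ⟨h1, zero_le_one.trans_eq h0.symm⟩)
  have hn : ‖-(s • A)‖ < 1 := by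
    rw [norm_neg, norm_smul, Real.norm_of_nonneg hs.1]
    nlinarith [hs.1, hs.2, norm_nonneg A]
  have hu : IsUnit (1 + s • A) := by
    have := isUnit_one_sub_of_norm_lt_one hn
    simpa using this
  have hu2 : IsUnit (((1 + s • A : E →L[ℝ] E)) : E →ₗ[ℝ] E) :=
    hu.map (ContinuousLinearMap.toLinearMapRingHom (R₁ := ℝ) (M₁ := E))
  exact (LinearMap.isUnit_det _ hu2).ne_zero hs0

/-- A map that is Lipschitz on the closed unit ball and vanishes on the sphere extends by zero. -/
lemma lipschitz_extend_zero (h : E → E) (C : NNReal) (hL : LipschitzOnWith C h (closedBall 0 1))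
    (hS : ∀ x ∈ sphere (0 : E) 1, h x = 0) :
    LipschitzWith C ((closedBall (0 : E) 1).indicator h) := by
  have key : ∀ x ∈ closedBall (0 : E) 1, ∀ y ∉ closedBall (0 : E) 1,
      dist (h x) 0 ≤ C * dist x y := by
    intro x hx y hy
    rw [mem_closedBall_zero_iff] at hx hy
    push Not at hy
    have hc : ContinuousOn (fun s : ℝ => ‖AffineMap.lineMap (k := ℝ) x y s‖) (Icc 0 1) := by
      apply Continuous.continuousOn
      exact continuous_norm.comp AffineMap.lineMap_continuous
    obtain ⟨s, hs, hs1⟩ := intermediate_value_Icc zero_le_one hc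
      (show (1:ℝ) ∈ Icc _ _ from ⟨by simpa using hx, by simpa using hy.le⟩)
    set z := AffineMap.lineMap (k := ℝ) x y s
    have hz : z ∈ sphere (0 : E) 1 := by simpa using hs1
    have := hL.dist_le_mul x (by simpa using hx) z (sphere_subset_closedBall hz)
    rw [hS z hz] at this
    refine this.trans ?_
    gcongr
    rw [dist_left_lineMap, Real.norm_of_nonneg hs.1]
    nlinarith [hs.2, dist_nonneg (x := x) (y := y)]
  refine LipschitzWith.of_dist_le_mul fun x y => ?_
  by_cases hx : x ∈ closedBall (0 : E) 1 <;> by_cases hy : y ∈ closedBall (0 : E) 1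
  · simpa [indicator_of_mem, hx, hy] using hL.dist_le_mul x hx y hy
  · rw [indicator_of_mem hx, indicator_of_notMem hy]; exact key x hx y hy
  · rw [indicator_of_mem hy, indicator_of_notMem hx, dist_comm, dist_comm x]; exact key y hy x hx
  · rw [indicator_of_notMem hy, indicator_of_notMem hx, dist_self]; positivity

lemma image_ball_eq (h : E → E) (C : NNReal) (hL : LipschitzOnWith C h (closedBall 0 1))
    (hS : ∀ x ∈ sphere (0 : E) 1, h x = 0) (hC : C < 1)
    (hmap : ∀ x ∈ closedBall (0 : E) 1, x + h x ∈ closedBall (0 : E) 1) :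
    InjOn (fun x => x + h x) (closedBall 0 1) ∧
    (fun x => x + h x) '' closedBall 0 1 = closedBall 0 1 := by
  constructor
  · intro x hx y hy hxy
    have h1 := hL.dist_le_mul x hx y hy
    have h2 : dist (h x) (h y) = dist x y := by
      rw [dist_eq_norm, dist_eq_norm, ← norm_neg]
      congr 1
      simp only at hxy
      rw [neg_sub, sub_eq_sub_iff_add_eq_add, add_comm, ← hxy]
    rw [h2] at h1
    have hC' : (C : ℝ) < 1 := by exact_mod_cast hC
    have : dist x y ≤ 0 := by nlinarith [dist_nonneg (x := x) (y := y)]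
    exact dist_le_zero.1 this
  · apply subset_antisymm
    · rintro _ ⟨x, hx, rfl⟩; exact hmap x hx
    · intro y hy
      have hlip := lipschitz_extend_zero h C hL hS
      have hcon : ContractingWith C (fun x => y - (closedBall (0 : E) 1).indicator h x) := by
        refine ⟨hC, LipschitzWith.of_dist_le_mul fun a b => ?_⟩
        rw [dist_sub_left]
        exact hlip.dist_le_mul a b
      have hfix := hcon.fixedPoint_isFixedPt
      set x := hcon.fixedPoint
      have hfix' : y - (closedBall (0 : E) 1).indicator h x = x := hfix
      by_cases hx : x ∈ closedBall (0 : E) 1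
      · rw [indicator_of_mem hx] at hfix'
        exact ⟨x, hx, by simp only; nth_rewrite 1 [← hfix']; simp⟩
      · rw [indicator_of_notMem hx, sub_zero] at hfix'
        exact absurd (hfix' ▸ hy) hx

variable [MeasurableSpace E] [BorelSpace E]

lemma no_C1_retraction (r : E → E) (hr : ∀ x ∈ closedBall (0 : E) 1, ContDiffAt ℝ 1 r x)
    (hr1 : ∀ x ∈ closedBall (0 : E) 1, ‖r x‖ = 1) (hrS : ∀ x ∈ sphere (0 : E) 1, r x = x) :
    False := by
  set B := closedBall (0 : E) 1 with hB
  let μ : Measure E := MeasureTheory.volume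
  have hBc : IsCompact B := isCompact_closedBall 0 1
  have hd : ∀ x ∈ B, HasFDerivAt r (fderiv ℝ r x) x := fun x hx =>
    ((hr x hx).differentiableAt (by norm_num)).hasFDerivAt
  let A : E → E →L[ℝ] E := fun x => fderiv ℝ r x - 1
  have hAc : ContinuousOn A B := by
    intro x hx
    have := ((hr x hx).fderiv_right (m := 0) (by norm_num)).continuousAt
    exact (this.sub continuousAt_const).continuousWithinAt
  have hA : ∀ x ∈ B, HasFDerivAt (fun x => r x - x) (A x) x := fun x hx =>
    (hd x hx).sub (hasFDerivAt_id x)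
  obtain ⟨C, hC⟩ := hBc.exists_bound_of_continuousOn hAc
  let K : NNReal := Real.toNNReal C + 1
  have hK0 : (0:ℝ) < K := by positivity
  have hAK : ∀ x ∈ B, ‖A x‖ ≤ K := fun x hx => by
    have h1 := hC x hx
    have h2 := Real.le_coe_toNNReal C
    have : (K : ℝ) = (Real.toNNReal C : ℝ) + 1 := by simp [K]
    linarith
  have hLip : LipschitzOnWith K (fun x => r x - x) B :=
    (convex_closedBall 0 1).lipschitzOnWith_of_nnnorm_hasFDerivWithin_le
      (fun x hx => (hA x hx).hasFDerivWithinAt) (fun x hx => hAK x hx)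
  -- volume identity for small parameters
  have hsmall : ∀ t : ℝ, 0 ≤ t → t * K < 1 → t ≤ 1 →
      ∫ x in B, (1 + t • A x).det ∂μ = μ.real B := by
    intro t ht htK ht1
    obtain ⟨t', ht'⟩ : ∃ t' : NNReal, (t' : ℝ) = t := ⟨Real.toNNReal t, Real.coe_toNNReal t ht⟩
    have hL : LipschitzOnWith (t' * K) (fun x => t • (r x - x)) B := by
      refine LipschitzOnWith.of_dist_le_mul fun x hx y hy => ?_
      rw [dist_smul₀, Real.norm_of_nonneg ht]
      have := hLip.dist_le_mul x hx y hy
      rw [NNReal.coe_mul, ht', mul_assoc]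
      exact mul_le_mul_of_nonneg_left this ht
    obtain ⟨hinj, himg⟩ := image_ball_eq (fun x => t • (r x - x)) (t' * K) hL
      (fun x hx => by simp [hrS x hx])
      (by rw [← NNReal.coe_lt_coe]; simpa [ht'] using htK)
      (fun x hx => by
        have h1 : x + t • (r x - x) = (1 - t) • x + t • r x := by
          rw [smul_sub, sub_smul, one_smul]; abel
        rw [h1]
        exact convex_closedBall (0:E) 1 hx (by simp [hr1 x hx]) (by linarith) ht (by ring))
    have hder : ∀ x ∈ B, HasFDerivWithinAt (fun x => x + t • (r x - x)) (1 + t • A x) B x :=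
      fun x hx => ((hasFDerivAt_id x).add ((hA x hx).const_smul t)).hasFDerivWithinAt
    have hcv := integral_image_eq_integral_abs_det_fderiv_smul μ hBc.measurableSet hder hinj
      (fun _ => (1:ℝ))
    rw [himg] at hcv
    simp only [smul_eq_mul, mul_one, integral_const, MeasurableSet.univ, measureReal_restrict_apply, univ_inter] at hcv
    rw [hcv]
    refine setIntegral_congr_fun hBc.measurableSet fun x hx => ?_
    refine (abs_of_pos (det_one_add_pos _ ?_)).symm
    rw [norm_smul, Real.norm_of_nonneg ht]
    exact lt_of_le_of_lt (mul_le_mul_of_nonneg_left (hAK x hx) ht) htK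
  -- interpolation
  let N := Module.finrank ℝ E
  let t : Fin (N + 1) → ℝ := fun i => 1 / ((i : ℝ) + 1 + K)
  have ht : Function.Injective t := by
    intro i j hij
    simp only [t] at hij
    have hi : (0:ℝ) < (i : ℝ) + 1 + K := by positivity
    have hj : (0:ℝ) < (j : ℝ) + 1 + K := by positivity
    rw [one_div, one_div, inv_inj] at hij
    apply Fin.ext
    have : (i : ℝ) = (j : ℝ) := by linarith
    exact_mod_cast this
  have hts : ∀ i, ∫ x in B, (1 + t i • A x).det ∂μ = μ.real B := by
    intro i
    have hi : (0:ℝ) < (i : ℝ) + 1 + K := by positivity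
    have hi0 : (0:ℝ) ≤ (i : ℝ) := by positivity
    refine hsmall _ (by positivity) ?_ ?_
    · simp only [t]; rw [one_div_mul_eq_div, div_lt_one hi]; linarith
    · simp only [t]; rw [div_le_one hi]; linarith
  have hint : ∀ i, IntegrableOn (fun x => (1 + t i • A x).det) B μ := by
    intro i
    refine ContinuousOn.integrableOn_compact hBc ?_
    have hc : ContinuousOn (fun x => 1 + t i • A x) B := by fun_prop
    exact ContinuousLinearMap.continuous_det.comp_continuousOn hc
  have hfull : ∫ x in B, (1 + A x).det ∂μ = μ.real B := by
    have : ∀ x, (1 + A x).det =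
      ∑ i, (Lagrange.basis Finset.univ t i).eval 1 * (1 + t i • A x).det :=
      fun x => det_interp (A x) t ht
    simp_rw [this]
    rw [integral_finsetSum _ (fun i _ => (hint i).const_mul _)]
    simp_rw [integral_const_mul, hts]
    rw [← Finset.sum_mul, sum_basis_one N t ht, one_mul]
  have hzero : ∀ x ∈ ball (0:E) 1, (1 + A x).det = 0 := by
    intro x hx
    have hxB : x ∈ B := ball_subset_closedBall hx
    have h1 : 1 + A x = fderiv ℝ r x := by simp [A]
    rw [h1]
    by_contra hne
    have hsurj : Function.Surjective (fderiv ℝ r x) := by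
      have := (LinearMap.equivOfDetNeZero (fderiv ℝ r x : E →ₗ[ℝ] E) hne).surjective
      exact this
    obtain ⟨v, hv⟩ := hsurj (r x)
    have hdn := (hd x hxB).norm_sq
    have hconst : (fun y => ‖r y‖ ^ 2) =ᶠ[𝓝 x] fun _ => (1:ℝ) := by
      filter_upwards [isOpen_ball.mem_nhds hx] with y hy
      rw [hr1 y (ball_subset_closedBall hy)]; norm_num
    have h0 := hdn.unique ((hasFDerivAt_const (1:ℝ) x).congr_of_eventuallyEq hconst)
    have h2 := DFunLike.congr_fun h0 v
    simp [hv, hr1 x hxB] at h2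
  have hae : ∫ x in B, (1 + A x).det ∂μ = 0 := by
    have hnull : μ (sphere (0:E) 1) = 0 := Measure.addHaar_sphere_of_ne_zero μ 0 one_ne_zero
    have : ∀ᵐ x ∂μ, x ∈ B → (1 + A x).det = 0 := by
      filter_upwards [measure_eq_zero_iff_ae_notMem.1 hnull] with x hx hxB
      apply hzero
      rw [mem_ball_zero_iff]
      rw [mem_sphere_zero_iff_norm] at hx
      exact lt_of_le_of_ne (by simpa [hB] using hxB) hx
    rw [setIntegral_congr_ae (g := fun _ => (0:ℝ)) hBc.measurableSet this]
    simp
  have hpos : 0 < μ.real B := by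
    refine ENNReal.toReal_pos ?_ hBc.measure_lt_top.ne
    exact (measure_closedBall_pos μ 0 one_pos).ne'
  linarith

lemma brouwer_smooth (P : E → E) (hP : ContDiff ℝ 1 P)
    (hPB : ∀ x ∈ closedBall (0 : E) 1, ‖P x‖ ≤ 1) : ∃ x ∈ closedBall (0 : E) 1, P x = x := by
  by_contra hno
  push Not at hno
  let u : E → E := fun x => x - P x
  let b : E → ℝ := fun x => inner ℝ x (u x)
  let D : E → ℝ := fun x => b x ^ 2 + ‖u x‖ ^ 2 * (1 - ‖x‖ ^ 2)
  let τ : E → ℝ := fun x => (- b x + Real.sqrt (D x)) / ‖u x‖ ^ 2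
  have hu0 : ∀ x ∈ closedBall (0 : E) 1, 0 < ‖u x‖ ^ 2 := fun x hx => by
    have : u x ≠ 0 := sub_ne_zero.2 (hno x hx).symm
    positivity
  have hbS : ∀ x, ‖x‖ = 1 → 0 < b x := by
    intro x hx
    have hxB : x ∈ closedBall (0:E) 1 := by simp [hx]
    have h1 := hPB x hxB
    have h2 := hu0 x hxB
    have h3 : ‖u x‖ ^ 2 = ‖x‖ ^ 2 - 2 * inner ℝ x (P x) + ‖P x‖ ^ 2 := norm_sub_sq_real x (P x)
    have h4 : b x = ‖x‖ ^ 2 - inner ℝ x (P x) := by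
      simp only [b, u, inner_sub_right, real_inner_self_eq_norm_sq]
    rw [hx] at h3 h4
    nlinarith [norm_nonneg (P x)]
  have hD : ∀ x ∈ closedBall (0 : E) 1, 0 < D x := by
    intro x hx
    have hx' : ‖x‖ ≤ 1 := by simpa using hx
    rcases hx'.lt_or_eq with h | h
    · have : 0 < 1 - ‖x‖ ^ 2 := by nlinarith [norm_nonneg x]
      have := mul_pos (hu0 x hx) this
      simp only [D]; nlinarith [sq_nonneg (b x)]
    · have := hbS x h
      simp only [D, h]; nlinarith
  have hus : ContDiff ℝ 1 u := contDiff_id.sub hP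
  have hbs : ContDiff ℝ 1 b := contDiff_id.inner ℝ hus
  have hDs : ContDiff ℝ 1 D := (hbs.pow 2).add
    ((hus.norm_sq ℝ).mul (contDiff_const.sub (contDiff_id.norm_sq ℝ)))
  refine no_C1_retraction (fun x => x + τ x • u x) ?_ ?_ ?_
  · intro x hx
    refine contDiffAt_id.add (ContDiffAt.smul ?_ hus.contDiffAt)
    exact ((hbs.contDiffAt.neg).add (hDs.contDiffAt.sqrt (hD x hx).ne')).div
      (hus.norm_sq ℝ).contDiffAt (hu0 x hx).ne'
  · intro x hx
    have h1 : ‖x + τ x • u x‖ ^ 2 = ‖x‖ ^ 2 + 2 * (τ x * b x) + τ x ^ 2 * ‖u x‖ ^ 2 := by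
      rw [norm_add_sq_real, inner_smul_right, norm_smul, mul_pow, Real.norm_eq_abs, sq_abs]
    have h2 : τ x * ‖u x‖ ^ 2 = - b x + Real.sqrt (D x) := div_mul_cancel₀ _ (hu0 x hx).ne'
    have h3 : Real.sqrt (D x) ^ 2 = b x ^ 2 + ‖u x‖ ^ 2 * (1 - ‖x‖ ^ 2) := Real.sq_sqrt (hD x hx).le
    have h4 : ‖u x‖ ^ 2 * (‖x + τ x • u x‖ ^ 2 - 1) = 0 := by
      rw [h1]
      have h5 : Real.sqrt (D x) = τ x * ‖u x‖ ^ 2 + b x := by linarith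
      rw [h5] at h3
      linear_combination h3
    have h6 : ‖x + τ x • u x‖ ^ 2 = 1 := by
      rcases mul_eq_zero.1 h4 with h | h
      · exact absurd h (hu0 x hx).ne'
      · linarith
    exact (pow_eq_one_iff_of_nonneg (norm_nonneg _) two_ne_zero).1 h6
  · intro x hx
    have hx1 : ‖x‖ = 1 := by simpa using hx
    have : τ x = 0 := by
      simp only [τ, D, hx1]
      rw [one_pow, sub_self, mul_zero, add_zero, Real.sqrt_sq (hbS x hx1).le]
      simp
    simp [this]

lemma brouwer (f : E → E) (hf : Continuous f)
    (hfB : ∀ x ∈ closedBall (0 : E) 1, ‖f x‖ ≤ 1) : ∃ x ∈ closedBall (0 : E) 1, f x = x := by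
  by_contra hno
  push Not at hno
  obtain ⟨x0, hx0, hmin⟩ := (isCompact_closedBall (0:E) 1).exists_isMinOn
    ⟨0, by simp⟩ ((hf.sub continuous_id).norm.continuousOn)
  have hδ : 0 < ‖f x0 - x0‖ := norm_pos_iff.2 (sub_ne_zero.2 (hno x0 hx0))
  set δ := ‖f x0 - x0‖ with hδd
  have hmin' : ∀ x ∈ closedBall (0 : E) 1, δ ≤ ‖f x - x‖ := fun x hx => hmin hx
  set η := δ / 4
  have hη : 0 < η := by positivity
  obtain ⟨g, hg, hgf, -⟩ := hf.exists_contDiff_approx (1 : ℕ∞) (ε := fun _ => η)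
    continuous_const (fun _ => hη)
  have hgn : ∀ x ∈ closedBall (0:E) 1, ‖g x‖ ≤ 1 + η := fun x hx => by
    have h1 := hgf x
    rw [dist_eq_norm] at h1
    have h2 := hfB x hx
    have : ‖g x‖ ≤ ‖g x - f x‖ + ‖f x‖ := by simpa using norm_add_le (g x - f x) (f x)
    linarith
  obtain ⟨x, hx, hxe⟩ := brouwer_smooth (fun x => (1 + η)⁻¹ • g x) (contDiff_const.smul (by exact_mod_cast hg)) (by
    intro x hx
    rw [norm_smul, norm_inv, Real.norm_of_nonneg (by positivity), inv_mul_le_iff₀ (by positivity), mul_one]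
    exact hgn x hx)
  have hgx : g x = (1 + η) • x := by
    rw [inv_smul_eq_iff₀ (by positivity)] at hxe
    exact hxe
  have h1 := hgf x
  rw [dist_eq_norm, hgx] at h1
  have h2 := hmin' x hx
  have h3 : f x - x = -((1 + η) • x - f x) + η • x := by rw [add_smul, one_smul]; abel
  have h4 : ‖f x - x‖ ≤ ‖(1 + η) • x - f x‖ + ‖η • x‖ := by
    rw [h3]; refine (norm_add_le _ _).trans ?_; rw [norm_neg]
  have h5 : ‖η • x‖ ≤ η := by
    rw [norm_smul, Real.norm_of_nonneg hη.le]
    have : ‖x‖ ≤ 1 := by simpa using hx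
    nlinarith
  have : δ = 4 * η := by simp only [η]; ring
  linarith

lemma brouwer_on (f : E → E) (hf : ContinuousOn f (closedBall 0 1))
    (hfB : ∀ x ∈ closedBall (0 : E) 1, ‖f x‖ ≤ 1) : ∃ x ∈ closedBall (0 : E) 1, f x = x := by
  obtain ⟨g, hg⟩ := ContinuousMap.exists_restrict_eq (isClosed_closedBall (x := (0:E)) (ε := 1))
    ⟨_, hf.domRestrict⟩
  have hgf : ∀ x ∈ closedBall (0:E) 1, g x = f x := fun x hx => DFunLike.congr_fun hg ⟨x, hx⟩
  obtain ⟨x, hx, h⟩ := brouwer g g.continuous (fun x hx => by rw [hgf x hx]; exact hfB x hx)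
  exact ⟨x, hx, by rw [← hgf x hx, h]⟩

/-- Invariance of domain at the centre of the ball (Kulpa's argument). -/
lemma invariance_of_domain (F : closedBall (0 : E) 1 → E) (hF : Continuous F)
    (hinj : Function.Injective F) : range F ∈ 𝓝 (F ⟨0, by simp⟩) := by
  have hcpt : CompactSpace (closedBall (0 : E) 1) :=
    isCompact_iff_compactSpace.1 (isCompact_closedBall 0 1)
  set y0 := F ⟨0, by simp⟩ with hy0
  obtain ⟨G, hG⟩ := ContinuousMap.exists_extension (hF.isClosedEmbedding hinj)
    (⟨Subtype.val, continuous_subtype_val⟩ : C(closedBall (0 : E) 1, E))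
  have hGF : ∀ x, G (F x) = x := fun x => DFunLike.congr_fun hG x
  have hG0 : G y0 = 0 := hGF _
  classical
  by_contra hnot
  have hK : IsCompact (range F) := isCompact_range hF
  obtain ⟨ρ, hρ, hGρ⟩ := Metric.continuousAt_iff.1 G.continuous.continuousAt (1/10) (by norm_num)
  rw [hG0] at hGρ
  set ε := ρ / 3 with hε
  have hεp : 0 < ε := by positivity
  obtain ⟨c, hcball, hcK⟩ : ∃ c ∈ ball y0 ε, c ∉ range F := by
    by_contra hcon
    push Not at hcon
    exact hnot (Filter.mem_of_superset (ball_mem_nhds y0 hεp) hcon)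
  have hGsmall : ∀ y, dist y c ≤ ε → ‖G y‖ < 1/10 := by
    intro y hy
    have : dist y y0 < ρ := by
      have := dist_triangle y c y0
      have h2 : dist c y0 < ε := hcball
      linarith
    simpa using hGρ this
  obtain ⟨δ, hδ, hδG⟩ := (hK.diff isOpen_ball : IsCompact (range F \ ball c ε)).exists_forall_le'
    (f := fun y => ‖G y‖) (a := 0) G.continuous.norm.continuousOn (by
      rintro _ ⟨⟨x, rfl⟩, hx⟩
      rw [norm_pos_iff, hGF]
      intro h0
      apply hx
      have : x = ⟨0, by simp⟩ := Subtype.ext h0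
      rw [this, mem_ball, dist_comm]
      exact hcball)
  set κ := min (δ / 4) (1 / 10) with hκ
  have hκp : 0 < κ := by positivity
  have hκ1 : κ ≤ δ / 4 := min_le_left _ _
  have hκ2 : κ ≤ 1 / 10 := min_le_right _ _
  obtain ⟨P, hP, hPG, -⟩ := G.continuous.exists_contDiff_approx (1 : ℕ∞) (ε := fun _ => κ)
    continuous_const (fun _ => hκp)
  let μ : Measure E := MeasureTheory.volume
  have hnull : μ (P '' sphere c ε) = 0 :=
    addHaar_image_eq_zero_of_differentiableOn_of_addHaar_eq_zero μ
      (hP.differentiable (by norm_num)).differentiableOn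
      (Measure.addHaar_sphere_of_ne_zero μ c hεp.ne')
  obtain ⟨w, hw, hwP⟩ : ∃ w ∈ ball (0:E) κ, w ∉ P '' sphere c ε := by
    by_contra hcon
    push Not at hcon
    have h1 := measure_mono (μ := μ) hcon
    rw [hnull] at h1
    exact (measure_ball_pos μ (0:E) hκp).ne' (le_antisymm h1 zero_le)
  have hw' : ‖w‖ < κ := by simpa using hw
  have hPw : ∀ y, ‖G y - (P y - w)‖ < 2 * κ := by
    intro y
    have h1 := hPG y
    rw [dist_comm, dist_eq_norm] at h1
    have : G y - (P y - w) = (G y - P y) + w := by abel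
    rw [this]
    have := norm_add_le (G y - P y) w
    linarith
  let Φ : E → E := fun y => c + max (ε / ‖y - c‖) 1 • (y - c)
  have hne : ∀ x, ‖F x - c‖ ≠ 0 := fun x => by
    rw [norm_ne_zero_iff, sub_ne_zero]
    rintro rfl
    exact hcK ⟨x, rfl⟩
  have hΦ1 : ∀ x, ε ≤ ‖F x - c‖ → Φ (F x) = F x := by
    intro x hx
    have hp : 0 < ‖F x - c‖ := lt_of_lt_of_le hεp hx
    have : max (ε / ‖F x - c‖) 1 = 1 := max_eq_right ((div_le_one hp).2 hx)
    simp [Φ, this]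
  have hΦ2 : ∀ x, ‖F x - c‖ ≤ ε → Φ (F x) ∈ sphere c ε := by
    intro x hx
    have hp : 0 < ‖F x - c‖ := lt_of_le_of_ne (norm_nonneg _) (hne x).symm
    have : max (ε / ‖F x - c‖) 1 = ε / ‖F x - c‖ := max_eq_left ((one_le_div hp).2 hx)
    simp only [Φ, this, mem_sphere_iff_norm, add_sub_cancel_left]
    rw [norm_smul, norm_div, norm_norm, div_mul_cancel₀ _ (hne x), Real.norm_of_nonneg hεp.le]
  have hcont : Continuous fun x : closedBall (0:E) 1 => (x : E) - (P (Φ (F x)) - w) := by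
    have hΦc : Continuous fun x => Φ (F x) := by
      simp only [Φ]
      refine continuous_const.add (Continuous.smul ?_ (hF.sub continuous_const))
      exact (continuous_const.div (hF.sub continuous_const).norm hne).max continuous_const
    exact continuous_subtype_val.sub ((hP.continuous.comp hΦc).sub continuous_const)
  let f : E → E := fun x => if h : x ∈ closedBall (0:E) 1 then x - (P (Φ (F ⟨x, h⟩)) - w) else 0
  have hfx : ∀ x : closedBall (0:E) 1, f x = (x : E) - (P (Φ (F x)) - w) := by
    intro x
    simp only [f, x.2, dif_pos]
  obtain ⟨x, hx, hfix⟩ := brouwer_on f (by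
      rw [continuousOn_iff_continuous_domRestrict]
      refine hcont.congr fun x => (hfx x).symm) (by
      intro x hx
      have h := hfx ⟨x, hx⟩
      simp only at h
      rw [h]
      have hGx := hGF ⟨x, hx⟩
      simp only at hGx
      set z : closedBall (0:E) 1 := ⟨x, hx⟩
      rcases le_total ε ‖F z - c‖ with h1 | h1
      · rw [hΦ1 z h1, ← hGx]
        have := hPw (F z)
        linarith
      · have h2 := hΦ2 z h1
        have h3 := hPw (Φ (F z))
        have h4 := hGsmall (Φ (F z)) (le_of_eq h2)
        have h5 := hGsmall (F z) (by rw [dist_eq_norm]; exact h1)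
        rw [hGx] at h5
        have h6 : x - (P (Φ (F z)) - w) = x + (G (Φ (F z)) - (P (Φ (F z)) - w)) - G (Φ (F z)) := by
          abel
        rw [h6]
        have h7 := norm_sub_le (x + (G (Φ (F z)) - (P (Φ (F z)) - w))) (G (Φ (F z)))
        have h8 := norm_add_le x (G (Φ (F z)) - (P (Φ (F z)) - w))
        linarith)
  have h := hfx ⟨x, hx⟩
  simp only at h
  rw [hfix] at h
  set z : closedBall (0:E) 1 := ⟨x, hx⟩
  have hz : P (Φ (F z)) - w = 0 := by
    have := sub_eq_self.1 h.symm
    exact this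
  rcases le_total ε ‖F z - c‖ with h1 | h1
  · have h3 := hPw (F z)
    rw [hΦ1 z h1] at hz
    rw [hz, sub_zero] at h3
    have h4 := hδG (F z) ⟨⟨z, rfl⟩, by rw [mem_ball, dist_eq_norm]; exact not_lt.2 h1⟩
    linarith
  · exact hwP ⟨_, hΦ2 z h1, sub_eq_zero.1 hz⟩

end Tripod

section Legs

/-- The union of the two legs of the tripod in the directions `ω` and `ω²`. -/
noncomputable def legMap (s : ℝ) : ℂ := ⟨-|s| / 2, Real.sqrt 3 / 2 * s⟩

lemma legMap_continuous : Continuous legMap := by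
  have : legMap = fun s : ℝ => ((-|s| / 2 : ℝ) : ℂ) + ((Real.sqrt 3 / 2 * s : ℝ) : ℂ) * Complex.I := by
    ext s
    apply Complex.ext <;> simp [legMap]
  rw [this]
  fun_prop

lemma legMap_injective : Function.Injective legMap := by
  intro s t h
  have := congrArg Complex.im h
  simp only [legMap] at this
  exact mul_left_cancel₀ (by positivity) this

lemma cube_aux (a : ℝ) (ha : a ^ 2 = 3) : (⟨-1 / 2, a / 2⟩ : ℂ) ^ 3 = 1 := by
  rw [pow_succ, pow_two]
  apply Complex.ext
  · simp; linear_combination (3/8) * ha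
  · simp; linear_combination (-a/8) * ha

lemma legMap_mem (s : ℝ) (hs : |s| ≤ 1) : legMap s ∈ tripod := by
  have h3 : Real.sqrt 3 ^ 2 = 3 := Real.sq_sqrt (by norm_num)
  refine ⟨|s|, ⟨abs_nonneg s, hs⟩, ?_⟩
  rcases le_total 0 s with h | h
  · refine ⟨⟨-1/2, Real.sqrt 3 / 2⟩, cube_aux _ h3, ?_⟩
    rw [abs_of_nonneg h]
    apply Complex.ext <;> simp [legMap, abs_of_nonneg h] <;> ring
  · refine ⟨⟨-1/2, (-Real.sqrt 3) / 2⟩, cube_aux _ (by rw [neg_sq, h3]), ?_⟩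
    rw [abs_of_nonpos h]
    apply Complex.ext <;> simp [legMap, abs_of_nonpos h] <;> ring

lemma legMap_eq_real (s t : ℝ) (h : legMap s = (t : ℂ)) : t = 0 := by
  have h1 := congrArg Complex.im h
  have h2 := congrArg Complex.re h
  simp only [legMap, Complex.ofReal_im, Complex.ofReal_re] at h1 h2
  have h3 : s = 0 := by
    rcases mul_eq_zero.1 h1 with h | h
    · exact absurd h (by positivity)
    · exact h
  rw [← h2, h3]; simp

lemma real_mem_tripod (t : ℝ) (ht : t ∈ Icc (0:ℝ) 1) : (t : ℂ) ∈ tripod :=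
  ⟨t, ht, 1, by simp, by simp⟩

end Legs

/-- The sphere `S^{m+1}` contains no `(m+1)`-branching point: there is no continuous
injective map from `T × Dᵐ` (the `(m+1)`-dimensional tripod) into the unit sphere of
`EuclideanSpace ℝ (Fin (m+2))`. -/
theorem no_injective_tripod_map_into_sphere (m : ℕ) :
    ¬ ∃ f : tripod × Metric.closedBall (0 : EuclideanSpace ℝ (Fin m)) 1 →
        Metric.sphere (0 : EuclideanSpace ℝ (Fin (m + 2))) 1,
      Continuous f ∧ Function.Injective f := by
  rintro ⟨f, hfc, hfi⟩
  have : Fact (Module.finrank ℝ (EuclideanSpace ℝ (Fin (m + 2))) = (m + 1) + 1) := ⟨by simp⟩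
  let D := Metric.closedBall (0 : EuclideanSpace ℝ (Fin m)) 1
  let B := Metric.closedBall (0 : EuclideanSpace ℝ (Fin (m + 1))) 1
  let d0 : D := ⟨0, by simp [D]⟩
  let b0 : B := ⟨0, by simp [B]⟩
  -- the third leg
  let q : ℝ → tripod × D := fun t =>
    (⟨((projIcc (0:ℝ) 1 zero_le_one t : ℝ) : ℂ), real_mem_tripod _ (projIcc _ _ _ t).2⟩, d0)
  have hqc : Continuous q := by
    refine Continuous.prodMk (Continuous.subtype_mk ?_ _) continuous_const
    exact Complex.continuous_ofReal.comp (continuous_subtype_val.comp continuous_projIcc)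
  have hq : ∀ t ∈ Icc (0:ℝ) 1, ((q t).1 : ℂ) = t := by
    intro t ht
    simp [q, projIcc_of_mem zero_le_one ht]
  -- the two other legs
  have htail : ∀ x : B, WithLp.toLp 2 (fun i : Fin m => (x : EuclideanSpace ℝ (Fin (m + 1))) i.succ) ∈ D := by
    intro x
    have hx : ‖(x : EuclideanSpace ℝ (Fin (m + 1)))‖ ≤ 1 := mem_closedBall_zero_iff.1 x.2
    have h2 := EuclideanSpace.norm_sq_eq (x : EuclideanSpace ℝ (Fin (m + 1)))
    rw [Fin.sum_univ_succ] at h2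
    rw [mem_closedBall_zero_iff]
    have h3 := EuclideanSpace.norm_sq_eq
      (WithLp.toLp 2 (fun i : Fin m => (x : EuclideanSpace ℝ (Fin (m + 1))) i.succ))
    simp only at h3
    refine (sq_le_one_iff₀ (norm_nonneg _)).1 ?_
    rw [h3]
    have h4 : ‖(x : EuclideanSpace ℝ (Fin (m + 1)))‖ ^ 2 ≤ 1 := (sq_le_one_iff₀ (norm_nonneg _)).2 hx
    have h5 := sq_nonneg ‖(x : EuclideanSpace ℝ (Fin (m + 1))) 0‖
    linarith
  have hhead : ∀ x : B, |(x : EuclideanSpace ℝ (Fin (m + 1))) 0| ≤ 1 := by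
    intro x
    have hx : ‖(x : EuclideanSpace ℝ (Fin (m + 1)))‖ ≤ 1 := mem_closedBall_zero_iff.1 x.2
    have := PiLp.norm_apply_le (x : EuclideanSpace ℝ (Fin (m + 1))) 0
    rw [Real.norm_eq_abs] at this
    exact this.trans hx
  let p : B → tripod × D := fun x =>
    (⟨legMap ((x : EuclideanSpace ℝ (Fin (m + 1))) 0), legMap_mem _ (hhead x)⟩, ⟨_, htail x⟩)
  have hpc : Continuous p := by
    refine Continuous.prodMk (Continuous.subtype_mk ?_ _) (Continuous.subtype_mk ?_ _)
    · refine legMap_continuous.comp ?_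
      fun_prop
    · fun_prop
  have hpi : Function.Injective p := by
    intro x y hxy
    have h1 : legMap _ = legMap _ := congrArg (fun z : tripod × D => (z.1 : ℂ)) hxy
    have h2 := congrArg (fun z : tripod × D => (z.2 : EuclideanSpace ℝ (Fin m))) hxy
    apply Subtype.ext
    ext i
    refine Fin.cases ?_ (fun j => ?_) i
    · exact legMap_injective h1
    · have := congrArg (fun z : EuclideanSpace ℝ (Fin m) => z j) h2
      exact this
  have hpq : ∀ x, ∀ t ∈ Icc (0:ℝ) 1, p x = q t → t = 0 := by
    intro x t ht h
    have h1 : legMap _ = ((q t).1 : ℂ) := congrArg (fun z : tripod × D => (z.1 : ℂ)) h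
    rw [hq t ht] at h1
    exact legMap_eq_real _ _ h1
  have hp0 : p b0 = q 0 := by
    refine Prod.ext (Subtype.ext ?_) (Subtype.ext ?_)
    · rw [hq 0 (by simp)]
      apply Complex.ext <;> simp [p, b0, legMap]
    · ext i; simp [p, b0, q, d0]
  -- stereographic projection from the image of the end of the third leg
  let v := f (q 1)
  let σ := stereographic' (m + 1) v
  have hσs : ∀ z, z ≠ q 1 → f z ∈ σ.source := by
    intro z hz
    rw [stereographic'_source]
    exact fun h => hz (hfi h)
  have hps : ∀ x, f (p x) ∈ σ.source := fun x => hσs _ fun h =>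
    one_ne_zero (hpq x 1 (by simp) h)
  have hFc : Continuous fun x => σ (f (p x)) :=
    σ.continuousOn.comp_continuous (hfc.comp hpc) hps
  have hFi : Function.Injective fun x => σ (f (p x)) := fun x y h =>
    hpi (hfi (σ.injOn (hps x) (hps y) h))
  have hnhds := invariance_of_domain (fun x => σ (f (p x))) hFc hFi
  have hq0 : ContinuousAt (fun t => σ (f (q t))) 0 := by
    have h1 : ContinuousAt σ (f (q 0)) := σ.continuousAt (hp0 ▸ hps b0)
    exact ContinuousAt.comp (f := fun t => f (q t)) h1 (hfc.comp hqc).continuousAt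
  have hev : ∀ᶠ t in 𝓝 (0:ℝ), σ (f (q t)) ∈ range fun x => σ (f (p x)) := by
    apply hq0
    change _ ∈ 𝓝 (σ (f (q 0)))
    rw [← hp0]
    exact hnhds
  have hev2 : ∀ᶠ t in 𝓝[>] (0:ℝ), t ∈ Ioo (0:ℝ) 1 := Ioo_mem_nhdsGT one_pos
  obtain ⟨t, ⟨x, hx⟩, ht⟩ := ((hev.filter_mono nhdsWithin_le_nhds).and hev2).exists
  have htI : t ∈ Icc (0:ℝ) 1 := ⟨ht.1.le, ht.2.le⟩
  have hqt : q t ≠ q 1 := by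
    intro h
    have h1 := congrArg (fun z : tripod × D => (z.1 : ℂ)) h
    rw [hq t htI, hq 1 (by simp)] at h1
    exact ht.2.ne (by exact_mod_cast h1)
  have := hfi (σ.injOn (hps x) (hσs _ hqt) hx)
  exact ht.1.ne' (hpq x t htI this)
end
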